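/- arXiv:1911.01052 — 3 statements merged into one kernel-verified Lean document; each statement's English description precedes it below -/
import Mathlib

section
/- Let b, w be positive integers and r a positive integer, and let P(T_{b,w} = n) = ((b+w-1)!/(w-1)!) · ((w+n-2)!/(b+w+n-2)!) · (b/(b+w+n-1)) for n ≥ 1 be the distribution of the waiting time for the first black ball in a Pólya urn with b black and w white balls. Then the r-th moment ∑_{n=1}^∞ n^r P(T_{b,w} = n) is finite if and only if b > r. In particular, this criterion does not depend on w. -/
/-!
Cancelling factorials turns `P(T_{b,w} = n)` into a constant over the `b + 1` consecutive factors
`(w + n - 1) ⋯ (b + w + n - 1)`, each asymptotic to `n`. Hence `P(T_{b,w} = n) ~ C / n ^ (b + 1)`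
with `C > 0`, and the moment series converges together with `∑ n ^ (r - (b + 1))`.
-/

open Asymptotics Filter
open scoped Nat

lemma isEquivalent_descFactorial_add (c k : ℕ) :
    (fun n : ℕ ↦ ((n + c).descFactorial k : ℝ)) ~[atTop] fun n ↦ (n : ℝ) ^ k := by
  have shift : (fun n : ℕ ↦ (n : ℝ) + c) ~[atTop] fun n ↦ (n : ℝ) :=
    IsEquivalent.refl.add_const_of_norm_tendsto_atTop
      (tendsto_norm_atTop_atTop.comp tendsto_natCast_atTop_atTop)
  calc (fun n : ℕ ↦ ((n + c).descFactorial k : ℝ))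
      ~[atTop] fun n ↦ ((n + c : ℕ) : ℝ) ^ k :=
        (isEquivalent_descFactorial k).comp_tendsto (tendsto_add_atTop_nat c)
    _ ~[atTop] fun n ↦ (n : ℝ) ^ k := by
        simpa only [Nat.cast_add] using! shift.pow k

lemma summable_rpow_mul_iff_of_isEquivalent_div_pow {f : ℕ → ℝ} {C : ℝ} (hC : C ≠ 0) {k : ℕ}
    (hf : f ~[atTop] fun n ↦ C / (n : ℝ) ^ k) (r : ℝ) :
    Summable (fun n : ℕ ↦ (n : ℝ) ^ r * f n) ↔ r + 1 < k := by
  have moment_tail : (fun n : ℕ ↦ (n : ℝ) ^ r * f n) ~[atTop] fun n ↦ C * (n : ℝ) ^ (r - k) := by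
    refine (IsEquivalent.refl.mul hf).trans_eventuallyEq ?_
    filter_upwards [eventually_gt_atTop 0] with n hn
    have n_pos : (0 : ℝ) < n := Nat.cast_pos.2 hn
    simp only [Pi.mul_apply, Real.rpow_sub n_pos, Real.rpow_natCast]
    ring
  rw [moment_tail.summable_iff_nat, summable_mul_left_iff hC, Real.summable_nat_rpow,
    sub_lt_iff_lt_add, neg_add_eq_sub, lt_sub_iff_add_lt]

/-- The probability `P(T_{b,w} = n)` that the first black ball appears at draw `n ≥ 1` in a Pólya
urn with `b` black and `w ≥ 1` white balls, given by its closed formula. At `n = 0` and at `w = 0`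
the subtractions inside the factorials truncate, and the value has no probabilistic meaning. -/
noncomputable def polyaWaitingProb (b w n : ℕ) : ℝ :=
  (((b + w - 1)! : ℝ) / ((w - 1)! : ℝ)) * (((w + n - 2)! : ℝ) / ((b + w + n - 2)! : ℝ))
    * ((b : ℝ) / ((b : ℝ) + w + n - 1))

/-- The constant `C` of the tail `P(T_{b,w} = n) ~ C / n ^ (b + 1)`. -/
noncomputable def polyaTailConst (b w : ℕ) : ℝ :=
  b * ((b + w - 1)! / (w - 1)!)

lemma polyaTailConst_pos {b : ℕ} (hb : 1 ≤ b) (w : ℕ) : 0 < polyaTailConst b w := by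
  unfold polyaTailConst
  positivity

lemma polyaWaitingProb_eq_div_descFactorial (b : ℕ) {w n : ℕ} (hw : 1 ≤ w) (hn : 1 ≤ n) :
    polyaWaitingProb b w n
      = polyaTailConst b w / (n + (b + w - 1)).descFactorial (b + 1) := by
  obtain ⟨v, rfl⟩ := Nat.exists_eq_add_of_le' hw
  obtain ⟨m, rfl⟩ := Nat.exists_eq_add_of_le' hn
  have factorial_split :
      ((v + m)! : ℝ) * (b + v + m + 1).descFactorial (b + 1)
        = (b + v + m + 1) * (b + v + m)! := by
    have h := Nat.factorial_mul_descFactorial (show b + 1 ≤ b + v + m + 1 by lia)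
    rw [show b + v + m + 1 - (b + 1) = v + m by lia, Nat.factorial_succ] at h
    exact_mod_cast h
  have desc_ne_zero : ((b + v + m + 1).descFactorial (b + 1) : ℝ) ≠ 0 :=
    Nat.cast_ne_zero.2 (Nat.descFactorial_pos.2 (by lia)).ne'
  have last_factor : (b : ℝ) + (v + 1 : ℕ) + (m + 1 : ℕ) - 1 = b + v + m + 1 := by
    push_cast
    ring
  rw [polyaWaitingProb, polyaTailConst, last_factor,
    show v + 1 + (m + 1) - 2 = v + m by lia,
    show b + (v + 1) + (m + 1) - 2 = b + v + m by lia,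
    show m + 1 + (b + (v + 1) - 1) = b + v + m + 1 by lia]
  field_simp
  linear_combination (b : ℝ) * factorial_split

lemma isEquivalent_polyaWaitingProb (b : ℕ) {w : ℕ} (hw : 1 ≤ w) :
    polyaWaitingProb b w ~[atTop] fun n ↦ polyaTailConst b w / (n : ℝ) ^ (b + 1) := by
  refine IsEquivalent.congr_left
    (IsEquivalent.refl.div (isEquivalent_descFactorial_add (b + w - 1) (b + 1))) ?_
  filter_upwards [eventually_ge_atTop 1] with n hn
  exact (polyaWaitingProb_eq_div_descFactorial b hw hn).symm

/-- The term at `n = 0`, which has no probabilistic meaning, does not affect summability. -/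
theorem polya_moment_finite_iff_general (b w : ℕ) (r : ℝ) (hb : 1 ≤ b) (hw : 1 ≤ w) :
    Summable (fun n : ℕ ↦ (n : ℝ) ^ r * polyaWaitingProb b w n) ↔ r < b := by
  rw [summable_rpow_mul_iff_of_isEquivalent_div_pow (polyaTailConst_pos hb w).ne'
    (isEquivalent_polyaWaitingProb b hw), Nat.cast_succ, add_lt_add_iff_right]

/-- Let `P(T_{b,w} = n) = ((b+w-1)!/(w-1)!) ((w+n-2)!/(b+w+n-2)!) (b/(b+w+n-1))`, `n ≥ 1`,
be the distribution of the waiting time for the first black ball in a Pólya urn with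
`b ≥ 1` black and `w ≥ 1` white balls. The `r`-th moment `∑_{n=1}^∞ n^r P(T_{b,w} = n)`
(for `r ≥ 1`) is finite if and only if `b > r`; in particular this does not depend on `w`.
(The summand below vanishes at `n = 0` since `r ≥ 1`, so summing over all `n : ℕ`
agrees with summing over `n ≥ 1`.) -/
theorem polya_moment_finite_iff (b w r : ℕ) (hb : 1 ≤ b) (hw : 1 ≤ w) (hr : 1 ≤ r) :
    Summable (fun n : ℕ => (n : ℝ) ^ r *
        (((Nat.factorial (b + w - 1) : ℝ) / (Nat.factorial (w - 1) : ℝ))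
          * ((Nat.factorial (w + n - 2) : ℝ) / (Nat.factorial (b + w + n - 2) : ℝ))
          * ((b : ℝ) / ((b : ℝ) + w + n - 1))))
      ↔ r < b := by
  simpa only [polyaWaitingProb, Real.rpow_natCast, Nat.cast_lt]
    using polya_moment_finite_iff_general b w r hb hw
end

section
/- For every positive integer w, the series ∑_{n=0}^∞ ∏_{i=0}^{n-1} (w+i)/(3+w+i) converges to (w+2)/2. Probabilistically: the waiting time T_{3,w} for the first black ball in a Pólya urn with 3 black and w white balls satisfies E[T_{3,w}] = (w+2)/2. -/
/-!
Raising the number of black balls by one replaces the denominators `b + w + i` by their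
successors, so the products `P(T > n)` for `b` and `b + 1` black balls differ by the factor
`(b + w) / (b + w + n)`. Up to a constant, the product for `b + 1` is therefore the decrement of
the product for `b`: the series telescopes, and the remainder vanishes because `∑ b / (b + w + i)`
diverges.
-/

open Filter Finset Topology

/-- The probability that the first `n` draws from a Pólya urn with `b` black and `w` white balls
are all white, i.e. `P(T_{b,w} > n)`. The counts `b` and `w` need not be integers. -/
noncomputable def allWhiteProb (b w : ℝ) (n : ℕ) : ℝ :=
  ∏ i ∈ range n, ((w + i) / (b + w + i))

theorem tendsto_prod_one_sub_zero_of_not_summable {a : ℕ → ℝ} (nonneg : ∀ i, 0 ≤ a i)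
    (le_one : ∀ i, a i ≤ 1) (not_summable : ¬Summable a) :
    Tendsto (fun n ↦ ∏ i ∈ range n, (1 - a i)) atTop (𝓝 0) := by
  have sum_tendsto : Tendsto (fun n ↦ ∑ i ∈ range n, a i) atTop atTop :=
    (not_summable_iff_tendsto_nat_atTop_of_nonneg nonneg).mp not_summable
  refine squeeze_zero (fun n ↦ prod_nonneg fun i _ ↦ sub_nonneg.mpr (le_one i)) (fun n ↦ ?_)
    (Real.tendsto_exp_neg_atTop_nhds_zero.comp sum_tendsto)
  calc ∏ i ∈ range n, (1 - a i)
      ≤ ∏ i ∈ range n, Real.exp (-a i) :=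
        prod_le_prod (fun i _ ↦ sub_nonneg.mpr (le_one i)) fun i _ ↦ Real.one_sub_le_exp_neg (a i)
    _ = Real.exp (-∑ i ∈ range n, a i) := by rw [← Real.exp_sum, sum_neg_distrib]

theorem not_summable_const_div_add_natCast {c : ℝ} (hc : c ≠ 0) (x : ℝ) :
    ¬Summable fun i : ℕ ↦ c / (x + i) := by
  simp only [div_eq_mul_one_div c, summable_mul_left_iff hc]
  rw [← summable_abs_iff]
  simpa only [abs_div, abs_one, Real.rpow_one, add_comm, lt_irrefl, iff_false] using
    Real.summable_one_div_nat_add_rpow x 1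

section AllWhiteProb

variable {b w : ℝ}

theorem allWhiteProb_zero (b w : ℝ) : allWhiteProb b w 0 = 1 := prod_range_zero _

theorem allWhiteProb_succ (b w : ℝ) (n : ℕ) :
    allWhiteProb b w (n + 1) = allWhiteProb b w n * ((w + n) / (b + w + n)) :=
  prod_range_succ _ n

theorem allWhiteProb_nonneg (hb : 0 ≤ b) (hw : 0 ≤ w) (n : ℕ) : 0 ≤ allWhiteProb b w n :=
  prod_nonneg fun _ _ ↦ by positivity

theorem allWhiteProb_eq_prod_one_sub (h : 0 < b + w) :
    allWhiteProb b w = fun n ↦ ∏ i ∈ range n, (1 - b / (b + w + i)) := by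
  refine funext fun n ↦ prod_congr rfl fun i _ ↦ ?_
  rw [one_sub_div (by positivity)]
  ring

theorem tendsto_allWhiteProb_zero (hb : 0 < b) (hw : 0 ≤ w) :
    Tendsto (allWhiteProb b w) atTop (𝓝 0) := by
  have le_one (i : ℕ) : b / (b + w + i) ≤ 1 :=
    div_le_one_of_le₀ (by linarith [i.cast_nonneg (α := ℝ)]) (by positivity)
  rw [allWhiteProb_eq_prod_one_sub (by positivity)]
  exact tendsto_prod_one_sub_zero_of_not_summable
    (fun i ↦ by positivity) le_one (not_summable_const_div_add_natCast hb.ne' (b + w))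

theorem mul_allWhiteProb_add_one (h : 0 < b + w) (n : ℕ) :
    (b + w + n) * allWhiteProb (b + 1) w n = (b + w) * allWhiteProb b w n := by
  induction n with
  | zero => simp only [allWhiteProb_zero, Nat.cast_zero, add_zero]
  | succ n ih =>
    rw [allWhiteProb_succ, allWhiteProb_succ, ← mul_assoc (b + w), ← ih]
    have succ_ne_zero : b + 1 + w + n ≠ 0 := by
      have : 0 < b + w + n := by positivity
      linarith
    push_cast
    field_simp
    ring

theorem mul_allWhiteProb_add_one_eq_sub (h : 0 < b + w) (n : ℕ) :
    b * allWhiteProb (b + 1) w n =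
      (b + w) * (allWhiteProb b w n - allWhiteProb b w (n + 1)) := by
  calc b * allWhiteProb (b + 1) w n
      = (b + w + n) * allWhiteProb (b + 1) w n * (1 - (w + n) / (b + w + n)) := by
        field_simp
        ring
    _ = (b + w) * (allWhiteProb b w n - allWhiteProb b w (n + 1)) := by
        rw [mul_allWhiteProb_add_one h, allWhiteProb_succ]
        ring

theorem mul_sum_allWhiteProb_add_one (h : 0 < b + w) (n : ℕ) :
    b * ∑ m ∈ range n, allWhiteProb (b + 1) w m = (b + w) * (1 - allWhiteProb b w n) := by
  simp only [mul_sum, mul_allWhiteProb_add_one_eq_sub h]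
  rw [← mul_sum, sum_range_sub', allWhiteProb_zero]

theorem polya_three_black_expectation_general (hb : 1 < b) (hw : 0 ≤ w) :
    HasSum (allWhiteProb b w) ((b + w - 1) / (b - 1)) := by
  obtain ⟨c, rfl⟩ : ∃ c, b = c + 1 := ⟨b - 1, by ring⟩
  have hc : 0 < c := by linarith
  have partial_sum (n : ℕ) : ∑ m ∈ range n, allWhiteProb (c + 1) w m =
      (c + w) / c * (1 - allWhiteProb c w n) := by
    rw [div_mul_eq_mul_div, eq_div_iff hc.ne', mul_comm,
      mul_sum_allWhiteProb_add_one (by positivity)]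
  rw [hasSum_iff_tendsto_nat_of_nonneg (allWhiteProb_nonneg (by positivity) hw)]
  have limit := ((tendsto_allWhiteProb_zero hc hw).const_sub 1).const_mul ((c + w) / c)
  simp only [partial_sum]
  convert limit using 2
  ring

end AllWhiteProb

/-- The waiting time `T_{3,w}` for the first black ball in a Pólya urn with 3 black and
`w ≥ 1` white balls satisfies
`E[T_{3,w}] = ∑_{n=0}^∞ ∏_{i=0}^{n-1} (w+i)/(3+w+i) = (w+2)/2`. -/
theorem polya_three_black_expectation (w : ℕ) (hw : 1 ≤ w) :
    HasSum (fun n : ℕ => ∏ i ∈ Finset.range n, (((w : ℝ) + i) / (3 + (w : ℝ) + i)))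
      (((w : ℝ) + 2) / 2) := by
  rw [show ((w : ℝ) + 2) / 2 = (3 + w - 1) / (3 - 1) by ring]
  exact polya_three_black_expectation_general (by norm_num) w.cast_nonneg
end

section
/- Let b, w be positive integers, let (a_k)_{k≥1} be a sequence of positive integers, set s_0 = 0 and s_k = a_1 + ⋯ + a_k for k ≥ 1, and define q_n = ∏_{j=0}^{n-1} (w+s_j)/(b+w+s_j). Then q_n → 0 as n → ∞ if and only if ∑_{j=1}^∞ 1/s_j = ∞. Probabilistically: in the generalized Pólya urn where upon drawing a white ball at time k one returns it together with a_k extra white balls, the first black ball is drawn in finite time with probability one if and only if ∑_{j=1}^∞ 1/s_j diverges. -/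
open Filter

/-!
The chance that the `j`-th draw is black, given that all earlier draws were white, is
`p j = b / (b + w + s j)`, so that `q_n = ∏_{j<n} (1 - p j)`. Such a product tends to `0` exactly
when `∑ p j` diverges. The constant shift `b + w` in the denominators does not affect convergence:
if either `∑ 1 / s j` or `∑ 1 / (b + w + s j)` converges, then `|s j| → ∞`, and the terms of the two
series are asymptotically equivalent.
-/

open Asymptotics Topology

theorem prod_one_sub_le_exp_neg_sum {ι : Type*} (t : Finset ι) {p : ι → ℝ}
    (hp : ∀ i ∈ t, p i ≤ 1) : ∏ i ∈ t, (1 - p i) ≤ Real.exp (-∑ i ∈ t, p i) :=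
  calc
    ∏ i ∈ t, (1 - p i) ≤ ∏ i ∈ t, Real.exp (-p i) :=
      Finset.prod_le_prod (fun i hi => sub_nonneg.2 (hp i hi))
        fun i _ => Real.one_sub_le_exp_neg (p i)
    _ = Real.exp (-∑ i ∈ t, p i) := by rw [← Real.exp_sum, Finset.sum_neg_distrib]

theorem tendsto_prod_one_sub_zero_iff_not_summable {p : ℕ → ℝ} (hp₀ : ∀ n, 0 ≤ p n)
    (hp₁ : ∀ n, p n < 1) :
    Tendsto (fun n => ∏ j ∈ Finset.range n, (1 - p j)) atTop (𝓝 0) ↔ ¬ Summable p := by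
  constructor
  · intro hzero hp
    have hnorm : Summable fun j => ‖-p j‖ := hp.neg.norm
    have hne : ∏' j, (1 + -p j) ≠ 0 :=
      tprod_one_add_ne_zero_of_summable (fun j => by linarith [hp₁ j]) hnorm
    have htprod := (multipliable_one_add_of_summable hnorm).hasProd.tendsto_prod_nat
    simp only [← sub_eq_add_neg] at hne htprod
    exact hne (tendsto_nhds_unique htprod hzero)
  · intro hp
    have hsum := (not_summable_iff_tendsto_nat_atTop_of_nonneg hp₀).1 hp
    exact squeeze_zero (fun n => Finset.prod_nonneg fun j _ => sub_nonneg.2 (hp₁ j).le)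
      (fun n => prod_one_sub_le_exp_neg_sum _ fun j _ => (hp₁ j).le)
      (Real.tendsto_exp_neg_atTop_nhds_zero.comp hsum)

theorem tendsto_norm_cofinite_atTop_of_summable_inv {ι K : Type*} [NormedDivisionRing K]
    {u : ι → K} (hu : ∀ i, u i ≠ 0) (h : Summable fun i => (u i)⁻¹) :
    Tendsto (fun i => ‖u i‖) cofinite atTop := by
  have hinv : Tendsto (fun i => (u i)⁻¹) cofinite (𝓝[≠] 0) :=
    tendsto_nhdsWithin_iff.2
      ⟨h.tendsto_cofinite_zero, Eventually.of_forall fun i => inv_ne_zero (hu i)⟩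
  simpa only [Function.comp_def, inv_inv] using
    tendsto_norm_cobounded_atTop.comp (tendsto_inv₀_nhdsNE_zero.comp hinv)

section ShiftedReciprocals

variable {ι 𝕜 : Type*} [RCLike 𝕜] {u : ι → 𝕜}

theorem summable_inv_const_add (c : 𝕜) (hu : ∀ i, u i ≠ 0) (h : Summable fun i => (u i)⁻¹) :
    Summable fun i => (c + u i)⁻¹ := by
  have hc : (fun _ => c) =o[cofinite] u :=
    isLittleO_const_left.2 (.inr (tendsto_norm_cofinite_atTop_of_summable_inv hu h))
  have hequiv : (fun i => c + u i) ~[cofinite] u := hc.add_isEquivalent .refl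
  exact hequiv.inv.summable_iff.2 h

theorem summable_inv_const_add_iff {c : 𝕜} (hu : ∀ i, u i ≠ 0) (hcu : ∀ i, c + u i ≠ 0) :
    (Summable fun i => (c + u i)⁻¹) ↔ Summable fun i => (u i)⁻¹ :=
  ⟨fun h => by simpa only [neg_add_cancel_left] using summable_inv_const_add (-c) hcu h,
    summable_inv_const_add c hu⟩

end ShiftedReciprocals

theorem polya_general_replacement_general {b w : ℝ} {s : ℕ → ℝ} (hb : 0 < b)
    (hw : ∀ j, 0 < w + s j) (hs : ∀ j, s (j + 1) ≠ 0) :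
    Tendsto (fun n => ∏ j ∈ Finset.range n, ((w + s j) / (b + w + s j))) atTop (𝓝 0)
      ↔ ¬ Summable fun j => 1 / s (j + 1) := by
  have hpos : ∀ j, 0 < b + w + s j := fun j => by linarith [hw j]
  have hwhite : ∀ j, (w + s j) / (b + w + s j) = 1 - b / (b + w + s j) := fun j => by
    rw [one_sub_div (hpos j).ne']
    ring
  have hsummable : (Summable fun j => b / (b + w + s j)) ↔ Summable fun j => 1 / s (j + 1) := by
    simp only [div_eq_mul_inv, one_mul, summable_mul_left_iff hb.ne']
    rw [← summable_nat_add_iff 1]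
    exact summable_inv_const_add_iff hs fun j => (hpos (j + 1)).ne'
  simp only [hwhite]
  rw [← hsummable]
  exact tendsto_prod_one_sub_zero_iff_not_summable (fun j => (div_pos hb (hpos j)).le)
    fun j => (div_lt_one (hpos j)).2 (by linarith [hw j])

/-- Generalized Pólya urn: starting with `b ≥ 1` black and `w ≥ 1` white balls, upon
drawing a white ball at time `k` one returns it together with `a_k ≥ 1` extra white
balls. With `s_0 = 0`, `s_k = a_1 + ⋯ + a_k`, the probability that the first `n` draws
all yield white balls is `q_n = ∏_{j=0}^{n-1} (w+s_j)/(b+w+s_j)`, and the first black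
ball is drawn in finite time with probability one (i.e. `q_n → 0`) if and only if
`∑_{j=1}^∞ 1/s_j` diverges. -/
theorem polya_general_replacement (b w : ℕ) (hb : 1 ≤ b) (hw : 1 ≤ w)
    (a : ℕ → ℕ) (ha : ∀ k, 1 ≤ k → 1 ≤ a k)
    (s : ℕ → ℕ) (hs0 : s 0 = 0) (hs : ∀ k, s (k + 1) = s k + a (k + 1)) :
    Tendsto (fun n : ℕ => ∏ j ∈ Finset.range n, (((w : ℝ) + s j) / ((b : ℝ) + w + s j)))
        atTop (nhds 0)
      ↔ ¬ Summable (fun j : ℕ => 1 / (s (j + 1) : ℝ)) := by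
  have hs_ne : ∀ j, s (j + 1) ≠ 0 := fun j => by
    have := ha (j + 1) (Nat.le_add_left 1 j)
    have := hs j
    omega
  exact polya_general_replacement_general (by positivity) (fun j => by positivity)
    fun j => Nat.cast_ne_zero.2 (hs_ne j)
end
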